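/- For n ∈ {6,7,8}, let E_n denote the tree on n vertices obtained from a path on n−1 vertices by attaching one extra leaf to the third vertex of the path (the Dynkin diagram of type E_n). Then for all integers k, m: dim SH^k(E_n, m) = 1 if k = m and 0 ≤ k ≤ n; dim SH^k(E_n, m) = (1 if 1 ≤ k ≤ n−4) + (1 if 2 ≤ k ≤ n−3) if m = k+1; and dim SH^k(E_n, m) = 0 otherwise. Equivalently, P_{E_n}(q,t) = P_{A_n}(q,t) + qt²(1+qt)·P_{A_{n−5}}(q,t). -/

import Mathlib

open Polynomial Matrix

attribute [local instance] Classical.propDecidable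

namespace Seifert

variable {V : Type} [Fintype V]

/-- A matching of a graph `G`: a finite set of edges of `G` that are pairwise disjoint. -/
def IsMatching (G : SimpleGraph V) (R : Finset (Sym2 V)) : Prop :=
  (∀ e ∈ R, e ∈ G.edgeSet) ∧
    ∀ e ∈ R, ∀ f ∈ R, e ≠ f → ∀ v : V, v ∈ e → v ∉ f

/-- A perfect matching: a matching covering every vertex. -/
def IsPerfectMatching (G : SimpleGraph V) (R : Finset (Sym2 V)) : Prop :=
  IsMatching G R ∧ ∀ v : V, ∃ e ∈ R, v ∈ e

/-- A configuration on `G`: a matching (the set of red edges) together with an assignment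
of a sign (`true` = plus, `false` = minus) to every vertex not covered by a red edge;
vertices covered by a red edge get `none`. -/
structure Config (G : SimpleGraph V) where
  red : Finset (Sym2 V)
  matching : IsMatching G red
  sign : V → Option Bool
  sign_none : ∀ v : V, sign v = none ↔ ∃ e ∈ red, v ∈ e

instance (G : SimpleGraph V) : Finite (Config G) :=
  Finite.of_injective (fun C => (C.red, C.sign)) (by
    rintro ⟨r, hr, s, hs⟩ ⟨r', hr', s', hs'⟩ h
    simp only [Prod.mk.injEq] at h
    obtain ⟨h1, h2⟩ := h
    subst h1; subst h2; rfl)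

noncomputable instance (G : SimpleGraph V) : Fintype (Config G) := Fintype.ofFinite _

/-- The grading `Q`: the number of minuses. -/
noncomputable def Qg {G : SimpleGraph V} (C : Config G) : ℕ :=
  (Finset.univ.filter fun v : V => C.sign v = some false).card

/-- The grading `E`: the number of minuses plus the number of red edges. -/
noncomputable def Eg {G : SimpleGraph V} (C : Config G) : ℕ := Qg C + C.red.card

/-- `DStep C C'` holds iff `C'` is one of the summands of `D(C)`: it is obtained from `C`
by deleting one red edge `e` and assigning a plus to one endpoint of `e` and a minus to
the other. -/
def DStep {G : SimpleGraph V} (C C' : Config G) : Prop :=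
  ∃ e ∈ C.red, C'.red = C.red.erase e ∧
    (∀ x : V, x ∉ e → C'.sign x = C.sign x) ∧
    ∃ u v : V, e = s(u, v) ∧ C'.sign u = some true ∧ C'.sign v = some false

/-- `dStep C C'` holds iff `C'` is one of the summands of `d(C)`: it is obtained from `C`
by changing the sign of one vertex from plus to minus. -/
def dStep {G : SimpleGraph V} (C C' : Config G) : Prop :=
  C'.red = C.red ∧ ∃ w : V, C.sign w = some true ∧ C'.sign w = some false ∧
    ∀ x : V, x ≠ w → C'.sign x = C.sign x

/-- The linear map on spaces of `F₂`-valued functions induced by a relation `r`: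
the basis vector of `a` is sent to the sum of the basis vectors of all `b` with `r a b`. -/
noncomputable def sumLin {α β : Type} [Fintype α] (r : α → β → Prop) :
    (α → ZMod 2) →ₗ[ZMod 2] (β → ZMod 2) where
  toFun f b := ∑ a : α, if r a b then f a else 0
  map_add' f g := by
    funext b
    simp only [Pi.add_apply]
    rw [← Finset.sum_add_distrib]
    exact Finset.sum_congr rfl fun a _ => by by_cases h : r a b <;> simp [h]
  map_smul' c f := by
    funext b
    simp only [RingHom.id_apply, Pi.smul_apply, smul_eq_mul, Finset.mul_sum]
    exact Finset.sum_congr rfl fun a _ => by by_cases h : r a b <;> simp [h]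

/-- The differential `D` on the total Seifert complex `SC(T)`. -/
noncomputable def Dmap (G : SimpleGraph V) :
    (Config G → ZMod 2) →ₗ[ZMod 2] (Config G → ZMod 2) :=
  sumLin DStep

/-- The differential `d` on the total Seifert complex `SC(T)`. -/
noncomputable def dmap (G : SimpleGraph V) :
    (Config G → ZMod 2) →ₗ[ZMod 2] (Config G → ZMod 2) :=
  sumLin dStep

/-- The graded piece `SC^k(T,n)`: the `F₂`-vector space with basis the configurations
with `Q = k` and `E = n`. -/
abbrev SC (G : SimpleGraph V) (k n : ℤ) : Type :=
  {C : Config G // (Qg C : ℤ) = k ∧ (Eg C : ℤ) = n} → ZMod 2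

/-- The differential `D` between graded pieces. (Mathematically it is nonzero only
from `SC^k(T,n)` to `SC^{k+1}(T,n)`.) -/
noncomputable def Dgr (G : SimpleGraph V) (k n k' n' : ℤ) :
    SC G k n →ₗ[ZMod 2] SC G k' n' :=
  sumLin fun C C' => DStep C.1 C'.1

/-- The dimension of the cohomology `ker g / im f` at the middle term of `A —f→ B —g→ C`
(taking the image of `f` intersected with the kernel of `g`). -/
noncomputable def cohDim {A B M : Type} [AddCommGroup A] [AddCommGroup B] [AddCommGroup M]
    [Module (ZMod 2) A] [Module (ZMod 2) B] [Module (ZMod 2) M]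
    (f : A →ₗ[ZMod 2] B) (g : B →ₗ[ZMod 2] M) : ℕ :=
  Module.finrank (ZMod 2)
    (LinearMap.ker g ⧸ (LinearMap.range f).comap (LinearMap.ker g).subtype)

/-- The dimension of the Seifert cohomology `SH^k(T,n)`. -/
noncomputable def SHdim (G : SimpleGraph V) (k n : ℤ) : ℕ :=
  cohDim (Dgr G (k - 1) n k n) (Dgr G k n (k + 1) n)

/-- The Seifert matrix of a graph with respect to an enumeration of its vertices. -/
noncomputable def seifertMatrix (G : SimpleGraph V) {m : ℕ} (e : V ≃ Fin m) :
    Matrix (Fin m) (Fin m) ℤ := fun i j =>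
  if i = j then -1 else if i < j ∧ G.Adj (e.symm i) (e.symm j) then 1 else 0

/-- The Alexander polynomial `det (t S - Sᵀ)` of a graph with respect to an enumeration
of its vertices. -/
noncomputable def alexDet (G : SimpleGraph V) {m : ℕ} (e : V ≃ Fin m) : Polynomial ℤ :=
  let S : Matrix (Fin m) (Fin m) (Polynomial ℤ) :=
    (seifertMatrix G e).map fun a => (Polynomial.C a : Polynomial ℤ)
  ((X : Polynomial ℤ) • S - Sᵀ).det

/-- The Alexander polynomial of a graph (or forest), defined as the matching polynomial
`Σ_R t^{|R|} (1-t)^{V - 2|R|}`, the sum being over all matchings `R`. -/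
noncomputable def alexMatch (G : SimpleGraph V) : Polynomial ℤ :=
  ∑ R : {R : Finset (Sym2 V) // IsMatching G R},
    X ^ R.1.card * (1 - X) ^ (Fintype.card V - 2 * R.1.card)


/-- The Dynkin diagram `E_n`: a path on the `n - 1` vertices `1, …, n-1` together with an
extra leaf `0` attached to the third vertex `3` of the path. -/
def dynkinE (n : ℕ) : SimpleGraph (Fin n) :=
  SimpleGraph.fromRel fun i j =>
    ((i : ℕ) = 0 ∧ (j : ℕ) = 3) ∨ (1 ≤ (i : ℕ) ∧ (j : ℕ) = (i : ℕ) + 1)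

/-!
Discrete Morse theory on the Seifert complex. Scan the path `1, …, n - 1` from the vertex `1` for
the first edge that is red or carries the signs `(+, -)`, and match the red version with the
`(+, -)` version. If there is none, the only possible red edge is `03`; it is matched in the same
way, with the orientation dictated by the sign at `2`. The unmatched configurations have at most
one red edge, so they lie in `SC^m(T, m)`, where there is at most one, and in `SC^{m-1}(T, m)`,
where they are counted directly.

The Morse differential between these two groups vanishes: the two resolutions of each red edge
cancel in the sum of all coefficients, so `SH^m(T, m) ≠ 0` as soon as `SC^m(T, m) ≠ 0`. Hence the
unmatched configurations count the cohomology.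
-/

attribute [ext] Config

theorem eq_range_card_of_pred_mem {A : Finset ℕ} (hA : ∀ i, i + 1 ∈ A → i ∈ A) :
    A = Finset.range A.card := by
  have hlower (d i : ℕ) (h : i + d ∈ A) : i ∈ A := by
    induction d with
    | zero => exact h
    | succ d ih => exact ih (hA _ h)
  refine Finset.eq_of_subset_of_card_le (fun j hj => ?_) (Finset.card_range _).le
  have hsub : Finset.range (j + 1) ⊆ A := fun i hi => by
    have hij := Nat.lt_succ_iff.mp (Finset.mem_range.mp hi)
    exact hlower (j - i) i (by rwa [Nat.add_sub_cancel' hij])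
  simpa using Finset.card_le_card hsub

section LinearAlgebra

theorem sumLin_apply {α β : Type} [Fintype α] (r : α → β → Prop) (f : α → ZMod 2) (b : β) :
    sumLin r f b = ∑ a, if r a b then f a else 0 := rfl

theorem sumLin_single {α β : Type} [Fintype α] [DecidableEq α] (r : α → β → Prop) (a : α) (b : β) :
    sumLin r (Pi.single a 1) b = if r a b then 1 else 0 := by
  simp only [sumLin_apply, Pi.single_apply]
  rw [Finset.sum_eq_single a (fun a' _ h => by simp [h]) (by simp)]
  simp

theorem linearIndependent_of_triangular {ι β K Γ : Type*} [Finite ι] [Ring K] [PartialOrder Γ]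
    (x : ι → β → K) (b : ι → β) (w : ι → Γ) (hdiag : ∀ i, x i (b i) = 1)
    (htri : ∀ i j, x i (b j) ≠ 0 → i = j ∨ w j < w i) : LinearIndependent K x := by
  have := Fintype.ofFinite ι
  rw [Fintype.linearIndependent_iff]
  intro c hc
  by_contra! hne
  obtain ⟨i₀, hi₀⟩ := hne
  obtain ⟨j, hj, hmax⟩ :=
    Finset.exists_maximalFor w (Finset.univ.filter fun i => c i ≠ 0) ⟨i₀, by simpa using hi₀⟩
  simp only [Finset.mem_filter, Finset.mem_univ, true_and] at hj hmax
  have hcoeff : ∑ i, c i * x i (b j) = c j := by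
    rw [Finset.sum_eq_single j _ (by simp), hdiag, mul_one]
    intro i _ hij
    by_cases hx : x i (b j) = 0
    · rw [hx, mul_zero]
    by_cases hci : c i = 0
    · rw [hci, zero_mul]
    have hlt := (htri i j hx).resolve_left hij
    exact absurd (hmax hci hlt.le) hlt.not_ge
  apply hj
  rw [← hcoeff]
  simpa using congrFun hc (b j)

theorem card_le_finrank_range_sumLin {ι α β : Type} {Γ : Type*} [Fintype ι] [Fintype α] [Finite β]
    [PartialOrder Γ] (r : α → β → Prop) (a : ι → α) (b : ι → β) (w : ι → Γ)
    (hdiag : ∀ i, r (a i) (b i)) (htri : ∀ i j, r (a i) (b j) → i = j ∨ w j < w i) :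
    Fintype.card ι ≤ Module.finrank (ZMod 2) (LinearMap.range (sumLin r)) := by
  have hli : LinearIndependent (ZMod 2) fun i => sumLin r (Pi.single (a i) 1) :=
    linearIndependent_of_triangular _ b w (fun i => by simp [sumLin_single, hdiag])
      fun i j h => htri i j (by simpa [sumLin_single] using h)
  have hli' : LinearIndependent (ZMod 2) fun i => (sumLin r).rangeRestrict (Pi.single (a i) 1) :=
    LinearIndependent.of_comp (LinearMap.range (sumLin r)).subtype hli
  exact hli'.fintype_card_le_finrank

theorem cohDim_add_finrank_range_add_finrank_range {A B M : Type} [AddCommGroup A] [AddCommGroup B]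
    [AddCommGroup M] [Module (ZMod 2) A] [Module (ZMod 2) B] [Module (ZMod 2) M]
    [FiniteDimensional (ZMod 2) B] (f : A →ₗ[ZMod 2] B) (g : B →ₗ[ZMod 2] M) (h : g ∘ₗ f = 0) :
    cohDim f g + Module.finrank (ZMod 2) (LinearMap.range f) +
      Module.finrank (ZMod 2) (LinearMap.range g) = Module.finrank (ZMod 2) B := by
  have hle : LinearMap.range f ≤ LinearMap.ker g := LinearMap.range_le_ker_iff.mpr h
  have hquot := Submodule.finrank_quotient_add_finrank
    ((LinearMap.range f).comap (LinearMap.ker g).subtype)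
  have hrange := (Submodule.comapSubtypeEquivOfLe hle).finrank_eq
  have hrank := LinearMap.finrank_range_add_finrank_ker g
  unfold cohDim
  omega

end LinearAlgebra

namespace Config

section Resolution

variable {W : Type} {G : SimpleGraph W}

/-- An oriented red edge of `C`. -/
abbrev RedDart (C : Config G) : Type := {p : W × W // s(p.1, p.2) ∈ C.red}

/-- The same red edge with the opposite orientation. -/
def RedDart.symm {C : Config G} (p : C.RedDart) : C.RedDart :=
  ⟨p.1.swap, by simpa [Sym2.eq_swap] using p.2⟩

theorem RedDart.adj {C : Config G} (p : C.RedDart) : G.Adj p.1.1 p.1.2 :=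
  C.matching.1 _ p.2

theorem RedDart.symm_ne {C : Config G} (p : C.RedDart) : p.symm ≠ p := fun h =>
  p.adj.ne' (congrArg (fun q : C.RedDart => q.1.1) h)

theorem red_eq_of_mem {C : Config G} {e f : Sym2 W} {v : W} (he : e ∈ C.red) (hf : f ∈ C.red)
    (hve : v ∈ e) (hvf : v ∈ f) : e = f := by
  by_contra h
  exact C.matching.2 e he f hf h v hve hvf

theorem sign_eq_none {C : Config G} {e : Sym2 W} {v : W} (he : e ∈ C.red) (hv : v ∈ e) :
    C.sign v = none :=
  (C.sign_none v).mpr ⟨e, he, hv⟩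

theorem RedDart.sign_fst {C : Config G} (p : C.RedDart) : C.sign p.1.1 = none :=
  sign_eq_none p.2 (Sym2.mem_mk_left _ _)

theorem RedDart.sign_snd {C : Config G} (p : C.RedDart) : C.sign p.1.2 = none :=
  sign_eq_none p.2 (Sym2.mem_mk_right _ _)

/-- The configuration obtained by deleting the red edge `p`, with a plus at its source and a minus
at its target. These are the summands of `D C`. -/
noncomputable def resolve (C : Config G) (p : C.RedDart) : Config G where
  red := C.red.erase s(p.1.1, p.1.2)
  matching := ⟨fun e he => C.matching.1 e (Finset.mem_of_mem_erase he), fun e he f hf =>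
    C.matching.2 e (Finset.mem_of_mem_erase he) f (Finset.mem_of_mem_erase hf)⟩
  sign x := if x = p.1.1 then some true else if x = p.1.2 then some false else C.sign x
  sign_none x := by
    have hcover : ∀ e ∈ C.red.erase s(p.1.1, p.1.2), p.1.1 ∉ e ∧ p.1.2 ∉ e := fun e he =>
      have hne := Finset.ne_of_mem_erase he
      have he' := Finset.mem_of_mem_erase he
      ⟨fun h => hne (red_eq_of_mem he' p.2 h (Sym2.mem_mk_left _ _)),
        fun h => hne (red_eq_of_mem he' p.2 h (Sym2.mem_mk_right _ _))⟩
    split_ifs with h₁ h₂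
    · simpa [h₁] using fun e h h' => (hcover e (by simp [h, h'])).1
    · simpa [h₂] using fun e h h' => (hcover e (by simp [h, h'])).2
    · rw [C.sign_none x]
      refine ⟨fun ⟨e, he, hx⟩ => ⟨e, Finset.mem_erase.mpr ⟨?_, he⟩, hx⟩,
        fun ⟨e, he, hx⟩ => ⟨e, Finset.mem_of_mem_erase he, hx⟩⟩
      rintro rfl
      simp [h₁, h₂] at hx

theorem resolve_symm_red (C : Config G) (p : C.RedDart) :
    (C.resolve p.symm).red = (C.resolve p).red :=
  congrArg C.red.erase (Sym2.eq_swap (a := p.1.2))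

theorem mem_resolve_red {C : Config G} {p : C.RedDart} {e : Sym2 W} :
    e ∈ (C.resolve p).red ↔ e ≠ s(p.1.1, p.1.2) ∧ e ∈ C.red :=
  Finset.mem_erase

theorem resolve_sign_fst (C : Config G) (p : C.RedDart) :
    (C.resolve p).sign p.1.1 = some true := by
  simp [resolve]

theorem resolve_sign_snd (C : Config G) (p : C.RedDart) :
    (C.resolve p).sign p.1.2 = some false := by
  simp [resolve, p.adj.ne']

theorem resolve_sign_of_notMem (C : Config G) (p : C.RedDart) {x : W}
    (hx : x ∉ s(p.1.1, p.1.2)) : (C.resolve p).sign x = C.sign x := by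
  rw [Sym2.mem_iff, not_or] at hx
  simp [resolve, hx.1, hx.2]

theorem dStep_iff {C C' : Config G} : DStep C C' ↔ ∃ p : C.RedDart, C.resolve p = C' := by
  constructor
  · rintro ⟨_, he, hred, hoff, u, v, rfl, hu, hv⟩
    refine ⟨⟨(u, v), he⟩, Config.ext hred.symm (funext fun x => ?_)⟩
    by_cases hx : x ∈ s(u, v)
    · rcases Sym2.mem_iff.mp hx with rfl | rfl
      · rw [hu, resolve_sign_fst C ⟨(x, v), he⟩]
      · rw [hv, resolve_sign_snd C ⟨(u, x), he⟩]
    · rw [hoff x hx, resolve_sign_of_notMem C ⟨(u, v), he⟩ hx]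
  · rintro ⟨p, rfl⟩
    exact ⟨_, p.2, rfl, fun x hx => resolve_sign_of_notMem C p hx, _, _, rfl,
      resolve_sign_fst C p, resolve_sign_snd C p⟩

theorem resolve_injective (C : Config G) : Function.Injective C.resolve := by
  intro p q h
  have hedge : s(p.1.1, p.1.2) = s(q.1.1, q.1.2) :=
    Finset.erase_injOn C.red p.2 q.2 (congrArg Config.red h)
  rcases Sym2.eq_iff.mp hedge with ⟨h₁, h₂⟩ | ⟨h₁, -⟩
  · exact Subtype.ext (Prod.ext h₁ h₂)
  · have hplus := resolve_sign_fst C p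
    rw [h, h₁, resolve_sign_snd] at hplus
    simp at hplus

theorem resolve_comm (C : Config G) (p q : C.RedDart) (hp : s(p.1.1, p.1.2) ∈ (C.resolve q).red)
    (hq : s(q.1.1, q.1.2) ∈ (C.resolve p).red) :
    (C.resolve p).resolve ⟨q.1, hq⟩ = (C.resolve q).resolve ⟨p.1, hp⟩ := by
  have hdisj := C.matching.2 _ p.2 _ q.2 (Finset.ne_of_mem_erase hp)
  refine Config.ext Finset.erase_right_comm (funext fun x => ?_)
  have hx := hdisj x
  simp only [Sym2.mem_iff, not_or] at hx
  simp only [resolve]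
  grind

end Resolution

variable {G : SimpleGraph V}

/-- The set of vertices carrying a minus, so that `Qg C` is its cardinality. -/
noncomputable def minuses (C : Config G) : Finset V :=
  Finset.univ.filter fun v => C.sign v = some false

theorem mem_minuses {C : Config G} {v : V} : v ∈ C.minuses ↔ C.sign v = some false := by
  simp [minuses]

theorem card_minuses (C : Config G) : C.minuses.card = Qg C := rfl

theorem ext_minuses {C C' : Config G} (hred : C.red = C'.red) (hminuses : C.minuses = C'.minuses) :
    C = C' := by
  refine Config.ext hred (funext fun v => ?_)
  have hnone : C.sign v = none ↔ C'.sign v = none := by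
    rw [C.sign_none, C'.sign_none, hred]
  have hminus : C.sign v = some false ↔ C'.sign v = some false := by
    rw [← mem_minuses, hminuses, mem_minuses]
  rcases h : C.sign v with _ | _ | _ <;> rcases h' : C'.sign v with _ | _ | _ <;> simp_all

/-- The configuration with red edges `R` and minuses at the vertices of `S` not covered by `R`. -/
noncomputable def ofMinuses {R : Finset (Sym2 V)} (hR : IsMatching G R) (S : Finset V) :
    Config G where
  red := R
  matching := hR
  sign v := if ∃ e ∈ R, v ∈ e then none else some (decide (v ∉ S))
  sign_none v := by simp

theorem minuses_ofMinuses {R : Finset (Sym2 V)} (hR : IsMatching G R) {S : Finset V}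
    (hS : ∀ v ∈ S, ∀ e ∈ R, v ∉ e) : (ofMinuses hR S).minuses = S := by
  ext v
  rw [mem_minuses]
  simp only [ofMinuses]
  split_ifs with h
  · obtain ⟨e, he, hv⟩ := h
    simpa using fun hvS => hS v hvS e he hv
  · simp

theorem minuses_resolve (C : Config G) (p : C.RedDart) :
    (C.resolve p).minuses = insert p.1.2 C.minuses := by
  ext x
  rw [Finset.mem_insert, mem_minuses, mem_minuses]
  by_cases hx : x ∈ s(p.1.1, p.1.2)
  · rcases Sym2.mem_iff.mp hx with rfl | rfl
    · simp [resolve_sign_fst, p.sign_fst, p.adj.ne]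
    · simp [resolve_sign_snd]
  · rw [resolve_sign_of_notMem C p hx, or_iff_right]
    rintro rfl
    exact hx (Sym2.mem_mk_right _ _)

theorem RedDart.snd_notMem_minuses {C : Config G} (p : C.RedDart) : p.1.2 ∉ C.minuses := by
  simp [mem_minuses, p.sign_snd]

theorem sum_minuses_resolve {M : Type*} [AddCommMonoid M] (C : Config G) (p : C.RedDart)
    (f : V → M) : ∑ v ∈ (C.resolve p).minuses, f v = f p.1.2 + ∑ v ∈ C.minuses, f v := by
  rw [minuses_resolve, Finset.sum_insert p.snd_notMem_minuses]

theorem Qg_resolve (C : Config G) (p : C.RedDart) : Qg (C.resolve p) = Qg C + 1 := by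
  rw [← card_minuses, ← card_minuses, minuses_resolve,
    Finset.card_insert_of_notMem p.snd_notMem_minuses]

theorem Eg_resolve (C : Config G) (p : C.RedDart) : Eg (C.resolve p) = Eg C := by
  have hred : (C.resolve p).red.card + 1 = C.red.card := Finset.card_erase_add_one p.2
  rw [Eg, Eg, Qg_resolve]
  omega

theorem sum_dStep {M : Type*} [AddCommMonoid M] (C : Config G)
    {P : Config G → Prop} [Fintype {C' // P C'}] (hP : ∀ p, P (C.resolve p)) (f : Config G → M) :
    ∑ C' : {C' // P C'}, (if DStep C C' then f C' else 0) = ∑ p, f (C.resolve p) := by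
  rw [← Finset.sum_filter]
  refine (Finset.sum_nbij (fun p => (⟨C.resolve p, hP p⟩ : {C' // P C'})) ?_ ?_ ?_
    fun _ _ => rfl).symm
  · exact fun p _ => by simpa using dStep_iff.mpr ⟨p, rfl⟩
  · exact fun p _ q _ h => C.resolve_injective (congrArg Subtype.val h)
  · rintro ⟨C', hC'⟩ h
    obtain ⟨p, rfl⟩ := dStep_iff.mp (by simpa using h)
    exact ⟨p, by simp, rfl⟩

theorem sum_resolve_resolve {M : Type*} [AddCommMonoid M] (C : Config G) (f : Config G → M)
    (hf : ∀ C', f C' + f C' = 0) :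
    ∑ p, ∑ q, f ((C.resolve p).resolve q) = 0 := by
  have mem_resolve : ∀ (p : C.RedDart) (q : (C.resolve p).RedDart),
      s(q.1.1, q.1.2) ∈ C.red ∧
        ∀ h : s(q.1.1, q.1.2) ∈ C.red, s(p.1.1, p.1.2) ∈ (C.resolve ⟨q.1, h⟩).red := fun p q =>
    ⟨Finset.mem_of_mem_erase q.2, fun _ =>
      Finset.mem_erase.mpr ⟨(Finset.ne_of_mem_erase q.2).symm, p.2⟩⟩
  rw [Finset.sum_sigma']
  refine Finset.sum_involution
    (fun x _ => ⟨⟨x.2.1, (mem_resolve x.1 x.2).1⟩, ⟨x.1.1, (mem_resolve x.1 x.2).2 _⟩⟩)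
    ?_ ?_ (by simp) (fun _ _ => rfl)
  · rintro ⟨p, q⟩ -
    rw [← C.resolve_comm p ⟨q.1, (mem_resolve p q).1⟩ ((mem_resolve p q).2 _) q.2]
    exact hf _
  · rintro ⟨p, q⟩ - - h
    have hpq : q.1 = p.1 := congrArg (fun x => x.1.1) h
    exact Finset.ne_of_mem_erase q.2 (by rw [hpq])

theorem sum_dStep_dStep {W : Type} [Finite W] {G : SimpleGraph W} (C C₂ : Config G)
    {P : Config G → Prop} [Fintype {C' // P C'}] (hP : ∀ p, P (C.resolve p)) :
    ∑ C₁ : {C' // P C'},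
      (if DStep C C₁ then (if DStep C₁ C₂ then (1 : ZMod 2) else 0) else 0) = 0 := by
  have := Fintype.ofFinite W
  have hstep (C₁ : Config G) : (if DStep C₁ C₂ then (1 : ZMod 2) else 0) =
      ∑ q, if C₁.resolve q = C₂ then (1 : ZMod 2) else 0 := by
    by_cases h : DStep C₁ C₂
    · obtain ⟨p, rfl⟩ := dStep_iff.mp h
      simp [h, C₁.resolve_injective.eq_iff]
    · have hne (q) : C₁.resolve q ≠ C₂ := fun hq => h (dStep_iff.mpr ⟨q, hq⟩)
      simp [h, hne]
  rw [C.sum_dStep hP fun C₁ => if DStep C₁ C₂ then (1 : ZMod 2) else 0]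
  simp only [hstep]
  exact C.sum_resolve_resolve (fun C' => if C' = C₂ then (1 : ZMod 2) else 0) fun _ =>
    CharTwo.add_self_eq_zero _

end Config

section Cohomology

variable {G : SimpleGraph V} {k m : ℤ}

theorem resolve_mem_degree {C : Config G} (hC : (Qg C : ℤ) = k - 1 ∧ (Eg C : ℤ) = m)
    (p : C.RedDart) : (Qg (C.resolve p) : ℤ) = k ∧ (Eg (C.resolve p) : ℤ) = m := by
  rw [C.Qg_resolve, C.Eg_resolve]
  push_cast
  exact ⟨by linarith [hC.1], hC.2⟩

theorem Dgr_comp_Dgr (G : SimpleGraph V) (k m : ℤ) :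
    Dgr G k m (k + 1) m ∘ₗ Dgr G (k - 1) m k m = 0 := by
  refine LinearMap.pi_ext' fun a => LinearMap.ext_ring (funext fun c => ?_)
  have hzero := a.1.sum_dStep_dStep c.1 (P := fun C => (Qg C : ℤ) = k ∧ (Eg C : ℤ) = m)
    (resolve_mem_degree a.2)
  simp only [LinearMap.comp_apply, LinearMap.single_apply, Dgr, LinearMap.zero_apply, Pi.zero_apply]
  rw [sumLin_apply]
  refine Eq.trans ?_ hzero
  simp only [sumLin_single]
  exact Finset.sum_congr rfl fun b _ => by split_ifs <;> rfl

theorem finrank_SC (G : SimpleGraph V) (k m : ℤ) :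
    Module.finrank (ZMod 2) (SC G k m) =
      (Finset.univ.filter fun C : Config G => (Qg C : ℤ) = k ∧ (Eg C : ℤ) = m).card := by
  rw [Module.finrank_fintype_fun_eq_card, Fintype.card_subtype]

theorem SHdim_add_finrank_range_add_finrank_range (G : SimpleGraph V) (k m : ℤ) :
    SHdim G k m + Module.finrank (ZMod 2) (LinearMap.range (Dgr G (k - 1) m k m)) +
      Module.finrank (ZMod 2) (LinearMap.range (Dgr G k m (k + 1) m)) =
        Module.finrank (ZMod 2) (SC G k m) :=
  cohDim_add_finrank_range_add_finrank_range _ _ (Dgr_comp_Dgr G k m)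

-- Each red edge is resolved in two ways, so the sum of all coefficients vanishes on the image
-- of `D`.
theorem finrank_range_Dgr_lt {C₀ : Config G} (hC₀ : (Qg C₀ : ℤ) = k ∧ (Eg C₀ : ℤ) = m) :
    Module.finrank (ZMod 2) (LinearMap.range (Dgr G (k - 1) m k m)) <
      Module.finrank (ZMod 2) (SC G k m) := by
  let coeffSum : SC G k m →ₗ[ZMod 2] ZMod 2 := ∑ C, LinearMap.proj C
  have hzero : coeffSum ∘ₗ Dgr G (k - 1) m k m = 0 := by
    refine LinearMap.pi_ext' fun a => LinearMap.ext_ring ?_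
    have hsum := a.1.sum_dStep (P := fun C => (Qg C : ℤ) = k ∧ (Eg C : ℤ) = m)
      (resolve_mem_degree a.2) fun _ => (1 : ZMod 2)
    have hpair : ∑ _p : a.1.RedDart, (1 : ZMod 2) = 0 :=
      Finset.sum_involution (fun p _ => p.symm) (fun _ _ => CharTwo.add_self_eq_zero _)
        (fun p _ _ => p.symm_ne) (by simp) (fun _ _ => rfl)
    simpa only [coeffSum, Dgr, LinearMap.comp_apply, LinearMap.sum_apply, LinearMap.proj_apply,
      LinearMap.single_apply, sumLin_single, LinearMap.zero_apply] using hsum.trans hpair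
  refine Submodule.finrank_lt fun htop => ?_
  have hker : LinearMap.ker coeffSum = ⊤ :=
    top_le_iff.mp (htop ▸ LinearMap.range_le_ker_iff.mpr hzero)
  have hone : coeffSum (Pi.single ⟨C₀, hC₀⟩ 1) = 1 := by simp [coeffSum]
  rw [LinearMap.ker_eq_top.mp hker] at hone
  exact zero_ne_one hone

theorem SHdim_diagonal_pos {C : Config G} (hC : (Qg C : ℤ) = m ∧ (Eg C : ℤ) = m) :
    0 < SHdim G m m := by
  have hempty : IsEmpty {C : Config G // (Qg C : ℤ) = m + 1 ∧ (Eg C : ℤ) = m} :=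
    ⟨fun ⟨C, hQ, hE⟩ => by rw [Eg] at hE; omega⟩
  have hzero : Module.finrank (ZMod 2) (LinearMap.range (Dgr G m m (m + 1) m)) = 0 := by
    have : Subsingleton (SC G (m + 1) m) := inferInstance
    exact Module.finrank_zero_of_subsingleton
  have hlt := finrank_range_Dgr_lt hC
  have hadd := SHdim_add_finrank_range_add_finrank_range G m m
  omega

theorem exists_Qg_eq_Eg_eq (G : SimpleGraph V) {q : ℕ} (hq : q ≤ Fintype.card V) :
    ∃ C : Config G, Qg C = q ∧ Eg C = q := by
  obtain ⟨S, -, hS⟩ := Finset.exists_subset_card_eq (s := (Finset.univ : Finset V)) hq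
  have hempty : IsMatching G ∅ := by simp [IsMatching]
  have hQ : Qg (Config.ofMinuses hempty S) = q := by
    rw [← Config.card_minuses, Config.minuses_ofMinuses hempty (by simp), hS]
  exact ⟨_, hQ, by rw [Eg, hQ]; simp [Config.ofMinuses]⟩

theorem SHdim_diagonal_pos_iff (G : SimpleGraph V) (m : ℤ) :
    0 < SHdim G m m ↔ 0 ≤ m ∧ m ≤ Fintype.card V := by
  constructor
  · intro h
    have hpos : 0 < Module.finrank (ZMod 2) (SC G m m) := by
      have := SHdim_add_finrank_range_add_finrank_range G m m
      omega
    rw [finrank_SC, Finset.card_pos] at hpos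
    obtain ⟨C, hC⟩ := hpos
    have hQ : Qg C ≤ Fintype.card V := Finset.card_le_univ _
    have := (Finset.mem_filter.mp hC).2.1
    omega
  · rintro ⟨h0, hcard⟩
    obtain ⟨q, rfl⟩ := Int.eq_ofNat_of_zero_le h0
    obtain ⟨C, hQ, hE⟩ := exists_Qg_eq_Eg_eq G (q := q) (by omega)
    exact SHdim_diagonal_pos (C := C) ⟨by rw [hQ], by rw [hE]⟩

end Cohomology

section MorseMatching

variable {G : SimpleGraph V} {Γ : Type*} [PartialOrder Γ] {M : Config G → Config G → Prop}
  {w : Config G → Γ} {k m : ℤ}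

theorem DStep.Qg_eq {C C' : Config G} (h : DStep C C') : Qg C' = Qg C + 1 := by
  obtain ⟨p, rfl⟩ := Config.dStep_iff.mp h
  exact C.Qg_resolve p

theorem DStep.Eg_eq {C C' : Config G} (h : DStep C C') : Eg C' = Eg C := by
  obtain ⟨p, rfl⟩ := Config.dStep_iff.mp h
  exact C.Eg_resolve p

/-- A matching `M` of the basis of the Seifert complex along nonzero coefficients of `D`, which is
acyclic in the sense of discrete Morse theory: a matched source whose differential involves the
partner of another source has a partner of larger weight `w`. -/
structure IsMorseMatching (M : Config G → Config G → Prop) (w : Config G → Γ) : Prop where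
  dStep : ∀ {a b}, M a b → DStep a b
  right_unique : ∀ {a b b'}, M a b → M a b' → b = b'
  disjoint : ∀ {a b c}, M a b → ¬ M b c
  triangular : ∀ {a b a' b'}, M a b → M a' b' → DStep a' b → a' = a ∨ w b < w b'

/-- The configurations of bidegree `(k, m)` which are matched to one of larger `Q`. -/
noncomputable def sources (M : Config G → Config G → Prop) (k m : ℤ) : Finset (Config G) :=
  Finset.univ.filter fun C => ((Qg C : ℤ) = k ∧ (Eg C : ℤ) = m) ∧ ∃ C', M C C'

/-- The configurations of bidegree `(k, m)` which are matched to one of smaller `Q`. -/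
noncomputable def targets (M : Config G → Config G → Prop) (k m : ℤ) : Finset (Config G) :=
  Finset.univ.filter fun C => ((Qg C : ℤ) = k ∧ (Eg C : ℤ) = m) ∧ ∃ C', M C' C

/-- The unmatched configurations of bidegree `(k, m)`. -/
noncomputable def criticals (M : Config G → Config G → Prop) (k m : ℤ) : Finset (Config G) :=
  Finset.univ.filter fun C =>
    ((Qg C : ℤ) = k ∧ (Eg C : ℤ) = m) ∧ (∀ C', ¬ M C C') ∧ ∀ C', ¬ M C' C

namespace IsMorseMatching

theorem left_unique {W : Type} {G : SimpleGraph W} {M : Config G → Config G → Prop}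
    {w : Config G → Γ} (hM : IsMorseMatching M w) {a a' b : Config G} (h : M a b) (h' : M a' b) :
    a' = a :=
  (hM.triangular h h' (hM.dStep h')).resolve_right (lt_irrefl _)

theorem card_targets (hM : IsMorseMatching M w) (k m : ℤ) :
    (targets M k m).card = (sources M (k - 1) m).card := by
  have hdeg {a b} (h : M a b) : ((Qg b : ℤ) = k ∧ (Eg b : ℤ) = m) ↔
      ((Qg a : ℤ) = k - 1 ∧ (Eg a : ℤ) = m) := by
    rw [(hM.dStep h).Qg_eq, (hM.dStep h).Eg_eq]
    push_cast
    exact and_congr_left fun _ => eq_sub_iff_add_eq.symm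
  refine le_antisymm
    (Finset.card_le_card_of_forall_subsingleton (fun b a => M a b) ?_ ?_)
    (Finset.card_le_card_of_forall_subsingleton M ?_ ?_)
  · intro b hb
    obtain ⟨hb, a, h⟩ := (Finset.mem_filter.mp hb).2
    exact ⟨a, Finset.mem_filter.mpr ⟨Finset.mem_univ _, (hdeg h).mp hb, b, h⟩, h⟩
  · exact fun a _ b hb b' hb' => hM.right_unique hb.2 hb'.2
  · intro a ha
    obtain ⟨ha, b, h⟩ := (Finset.mem_filter.mp ha).2
    exact ⟨b, Finset.mem_filter.mpr ⟨Finset.mem_univ _, (hdeg h).mpr ha, a, h⟩, h⟩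
  · exact fun b _ a ha a' ha' => hM.left_unique ha'.2 ha.2

theorem finrank_SC_eq (hM : IsMorseMatching M w) (k m : ℤ) :
    Module.finrank (ZMod 2) (SC G k m) =
      (sources M k m).card + (sources M (k - 1) m).card + (criticals M k m).card := by
  have hdisj : Disjoint (sources M k m) (targets M k m) := by
    refine Finset.disjoint_left.mpr fun b hs ht => ?_
    obtain ⟨-, c, hbc⟩ := (Finset.mem_filter.mp hs).2
    obtain ⟨-, a, hab⟩ := (Finset.mem_filter.mp ht).2
    exact hM.disjoint hab hbc
  have hdisj' : Disjoint (sources M k m ∪ targets M k m) (criticals M k m) := by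
    refine Finset.disjoint_left.mpr fun b hst hc => ?_
    obtain ⟨-, hc, hc'⟩ := (Finset.mem_filter.mp hc).2
    rcases Finset.mem_union.mp hst with hs | ht
    · exact (Finset.mem_filter.mp hs).2.2.elim hc
    · exact (Finset.mem_filter.mp ht).2.2.elim hc'
  rw [finrank_SC, ← hM.card_targets, ← Finset.card_union_of_disjoint hdisj,
    ← Finset.card_union_of_disjoint hdisj']
  congr 1
  ext C
  simp only [sources, targets, criticals, Finset.mem_union, Finset.mem_filter, Finset.mem_univ,
    true_and, ← not_exists]
  tauto

theorem card_sources_le (hM : IsMorseMatching M w) (k m : ℤ) :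
    (sources M k m).card ≤
      Module.finrank (ZMod 2) (LinearMap.range (Dgr G k m (k + 1) m)) := by
  have hsource (a : sources M k m) := (Finset.mem_filter.mp a.2).2
  choose partner hpartner using fun a => (hsource a).2
  have hdeg (a) : (Qg (partner a) : ℤ) = k + 1 ∧ (Eg (partner a) : ℤ) = m := by
    rw [(hM.dStep (hpartner a)).Qg_eq, (hM.dStep (hpartner a)).Eg_eq]
    exact ⟨by rw [Nat.cast_succ, (hsource a).1.1], (hsource a).1.2⟩
  rw [← Fintype.card_coe]
  exact card_le_finrank_range_sumLin _ (fun a => ⟨a.1, (hsource a).1⟩)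
    (fun a => ⟨partner a, hdeg a⟩) (fun a => w (partner a)) (fun a => hM.dStep (hpartner a))
    fun a' a h => (hM.triangular (hpartner a) (hpartner a') h).imp_left Subtype.ext

-- The rank of `D` exceeds the number of matched pairs by `δ j`, and the Morse inequalities read
-- `SH j + δ j + δ (j - 1) = #criticals j`. Only `δ (m - 1)` could be nonzero; it vanishes because
-- the diagonal cohomology does not.
theorem SHdim_eq_card_criticals (hM : IsMorseMatching M w)
    (hdegree : ∀ j, (criticals M j m).Nonempty → j = m ∨ j = m - 1)
    (hdiag : (criticals M m m).card ≤ 1) (k : ℤ) : SHdim G k m = (criticals M k m).card := by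
  obtain ⟨δ, hδ⟩ : ∃ δ : ℤ → ℕ, ∀ j, Module.finrank (ZMod 2)
      (LinearMap.range (Dgr G j m (j + 1) m)) = (sources M j m).card + δ j :=
    ⟨_, fun j => (Nat.add_sub_of_le (hM.card_sources_le j m)).symm⟩
  have hmorse (j : ℤ) : SHdim G j m + δ j + δ (j - 1) = (criticals M j m).card := by
    have hadd := SHdim_add_finrank_range_add_finrank_range G j m
    have hδ' := hδ (j - 1)
    rw [sub_add_cancel] at hδ'
    rw [hM.finrank_SC_eq, hδ, hδ'] at hadd
    omega
  have hzero (j : ℤ) (hj : j ≠ m) (hj' : j ≠ m - 1) : (criticals M j m).card = 0 :=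
    Finset.card_eq_zero.mpr <| Finset.not_nonempty_iff_eq_empty.mp fun h =>
      (hdegree j h).elim hj hj'
  have hdiag_le : (criticals M m m).card ≤ SHdim G m m := by
    rcases (criticals M m m).eq_empty_or_nonempty with h | ⟨C, hC⟩
    · simp [h]
    · exact hdiag.trans (SHdim_diagonal_pos (Finset.mem_filter.mp hC).2.1)
  have hδ_zero (j : ℤ) : δ j = 0 := by
    have hj := hmorse j
    have hj' := hmorse (j + 1)
    rw [add_sub_cancel_right] at hj'
    by_cases h : j + 1 = m
    · rw [h] at hj'
      omega
    · by_cases h' : j = m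
      · have := hzero (j + 1) h (by omega)
        omega
      · have := hzero j h' (by omega)
        omega
  simpa only [hδ_zero, add_zero] using hmorse k

end IsMorseMatching

end MorseMatching

namespace Config

section Fusion

variable {W : Type} {G : SimpleGraph W}

theorem eq_of_resolve_eq {C C' : Config G} (p : C.RedDart) (q : C'.RedDart) (hpq : p.1 = q.1)
    (h : C.resolve p = C'.resolve q) : C = C' := by
  obtain ⟨⟨u, v⟩, hp⟩ := p
  obtain ⟨_, hq⟩ := q
  subst hpq
  refine Config.ext ?_ (funext fun x => ?_)
  · rw [← Finset.insert_erase hp, ← Finset.insert_erase hq]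
    exact congrArg (insert s(u, v)) (congrArg Config.red h)
  · by_cases hx : x ∈ s(u, v)
    · rw [sign_eq_none hp hx, sign_eq_none hq hx]
    · rw [← resolve_sign_of_notMem C ⟨(u, v), hp⟩ hx, h, resolve_sign_of_notMem C' ⟨(u, v), hq⟩ hx]

theorem exists_resolve_eq {C : Config G} {u v : W} (h : G.Adj u v) (hu : C.sign u = some true)
    (hv : C.sign v = some false) :
    ∃ (B : Config G) (p : B.RedDart), p.1 = (u, v) ∧ B.resolve p = C := by
  have hfree (e) (he : e ∈ C.red) : u ∉ e ∧ v ∉ e :=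
    ⟨fun hue => by simp [sign_eq_none he hue] at hu, fun hve => by simp [sign_eq_none he hve] at hv⟩
  have hdisj (e) (he : e ∈ C.red) (x) (hx : x ∈ e) : x ∉ s(u, v) := by
    rw [Sym2.mem_iff]
    rintro (rfl | rfl)
    exacts [(hfree e he).1 hx, (hfree e he).2 hx]
  let B : Config G :=
    { red := insert s(u, v) C.red
      matching := by
        refine ⟨?_, ?_⟩
        · simpa [h] using C.matching.1
        · simp only [Finset.mem_insert]
          rintro e (rfl | he) f (rfl | hf) hef x hxe
          · exact absurd rfl hef
          · exact fun hxf => hdisj f hf x hxf hxe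
          · exact hdisj e he x hxe
          · exact C.matching.2 e he f hf hef x hxe
      sign := fun x => if x ∈ s(u, v) then none else C.sign x
      sign_none := fun x => by
        by_cases hx : x ∈ s(u, v)
        · simp only [hx, if_true, true_iff]
          exact ⟨_, Finset.mem_insert_self _ _, hx⟩
        · simp only [hx, if_false, C.sign_none, Finset.mem_insert, exists_eq_or_imp, false_or] }
  refine ⟨B, ⟨(u, v), Finset.mem_insert_self _ _⟩, rfl, Config.ext ?_ (funext fun x => ?_)⟩
  · exact Finset.erase_insert fun he => (hfree _ he).1 (Sym2.mem_mk_left _ _)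
  · simp only [resolve, B, Sym2.mem_iff]
    grind

/-- The dart `(u, v)` is active in `C` if it is red or carries the signs `(+, -)`; for an edge
`uv` this means that `C` is the source or the target of a resolution along `(u, v)`. -/
def Active (C : Config G) (u v : W) : Prop :=
  s(u, v) ∈ C.red ∨ (C.sign u = some true ∧ C.sign v = some false)

theorem Active.sign_fst_ne {C : Config G} {u v : W} (h : C.Active u v) :
    C.sign u ≠ some false := by
  rcases h with h | h
  · simp [sign_eq_none h (Sym2.mem_mk_left _ _)]
  · simp [h.1]

theorem Active.sign_snd_ne {C : Config G} {u v : W} (h : C.Active u v) :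
    C.sign v ≠ some true := by
  rcases h with h | h
  · simp [sign_eq_none h (Sym2.mem_mk_right _ _)]
  · simp [h.2]

/-- `C` and `C'` differ at most in the edge `uv` and its endpoints. -/
structure AgreeOff (u v : W) (C C' : Config G) : Prop where
  sign_eq : ∀ x, x ≠ u → x ≠ v → C.sign x = C'.sign x
  mem_red_iff : ∀ e, e ≠ s(u, v) → (e ∈ C.red ↔ e ∈ C'.red)

theorem AgreeOff.symm {u v : W} {C C' : Config G} (h : AgreeOff u v C C') : AgreeOff u v C' C :=
  ⟨fun x hu hv => (h.sign_eq x hu hv).symm, fun e he => (h.mem_red_iff e he).symm⟩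

theorem agreeOff_resolve (C : Config G) (p : C.RedDart) :
    AgreeOff p.1.1 p.1.2 C (C.resolve p) where
  sign_eq x hu hv := (C.resolve_sign_of_notMem p (by simp [hu, hv])).symm
  mem_red_iff e he := by simp [mem_resolve_red, he]

theorem AgreeOff.active {u v x y : W} {C C' : Config G} (h : AgreeOff u v C C')
    (hxy : C'.Active x y) (hne : s(x, y) ≠ s(u, v))
    (hx : C'.sign x = some true → C'.sign y = some false → x ≠ u ∧ x ≠ v ∧ y ≠ u ∧ y ≠ v) :
    C.Active x y := by
  rcases hxy with hred | ⟨hplus, hminus⟩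
  · exact Or.inl ((h.mem_red_iff _ hne).mpr hred)
  · obtain ⟨hxu, hxv, hyu, hyv⟩ := hx hplus hminus
    exact Or.inr ⟨(h.sign_eq x hxu hxv).trans hplus, (h.sign_eq y hyu hyv).trans hminus⟩

theorem active_resolve (C : Config G) (p : C.RedDart) : (C.resolve p).Active p.1.1 p.1.2 :=
  Or.inr ⟨C.resolve_sign_fst p, C.resolve_sign_snd p⟩

end Fusion

end Config

namespace dynkinE

variable {p : ℕ} {C C' : Config (dynkinE (p + 4))} {u v x y : Fin (p + 4)}

theorem val_two : ((2 : Fin (p + 4)) : ℕ) = 2 := rfl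

theorem val_three : ((3 : Fin (p + 4)) : ℕ) = 3 := rfl

/-- `(u, v)` is an edge of the path `1, …, n - 1` inside `E_n`, oriented away from `1`. -/
def PathEdge {n : ℕ} (u v : Fin n) : Prop := 1 ≤ (u : ℕ) ∧ (v : ℕ) = u + 1

/-- No dart of the path `1, …, n - 1` is active in `C`. -/
def PathInactive {n : ℕ} (C : Config (dynkinE n)) : Prop :=
  ∀ u v, PathEdge u v → ¬ C.Active u v

theorem adj_iff : (dynkinE (p + 4)).Adj u v ↔
    PathEdge u v ∨ PathEdge v u ∨ (u = 0 ∧ v = 3) ∨ (u = 3 ∧ v = 0) := by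
  simp only [dynkinE, SimpleGraph.fromRel_adj, PathEdge, Fin.ext_iff, ne_eq, val_three,
    Fin.val_zero]
  omega

theorem exists_pathEdge_of_mem_edgeSet {e : Sym2 (Fin (p + 4))}
    (he : e ∈ (dynkinE (p + 4)).edgeSet) (hne : e ≠ s(0, 3)) :
    ∃ u v, PathEdge u v ∧ e = s(u, v) := by
  induction e using Sym2.ind with
  | _ u v =>
    rcases adj_iff.mp he with huv | hvu | ⟨rfl, rfl⟩ | ⟨rfl, rfl⟩
    · exact ⟨u, v, huv, rfl⟩
    · exact ⟨v, u, hvu, Sym2.eq_swap⟩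
    · exact absurd rfl hne
    · exact absurd Sym2.eq_swap hne

theorem PathEdge.ne_zero_three (h : PathEdge x y) : s(x, y) ≠ s(0, 3) := by
  simp only [PathEdge] at h
  simp only [ne_eq, Sym2.eq_iff, Fin.ext_iff, Fin.val_zero, val_three]
  omega

/-- `(u, v)` is the dart along which `C` is matched: the first active path edge if there is one,
and otherwise, under a condition on the neighbours of `3`, one of the two orientations of the edge
`03`. -/
inductive Pivot (C : Config (dynkinE (p + 4))) : Fin (p + 4) → Fin (p + 4) → Prop
  | path {u v : Fin (p + 4)} (huv : PathEdge u v) (hact : C.Active u v)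
      (hfirst : ∀ x y, PathEdge x y → x < u → ¬ C.Active x y) : Pivot C u v
  | leafFirst (hact : C.Active 0 3) (h2 : C.sign 2 = some false)
      (hpath : PathInactive C) : Pivot C 0 3
  | leafLast (hact : C.Active 3 0) (h2 : C.sign 2 = some true)
      (h4 : ∀ x : Fin (p + 4), (x : ℕ) = 4 → C.sign x ≠ some false)
      (hpath : PathInactive C) : Pivot C 3 0

theorem Pivot.active (h : Pivot C u v) : C.Active u v := by
  cases h <;> assumption

theorem Pivot.adj (h : Pivot C u v) : (dynkinE (p + 4)).Adj u v := by
  rw [adj_iff]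
  cases h <;> simp [*]

theorem Pivot.unique (h : Pivot C u v) (h' : Pivot C x y) : u = x ∧ v = y := by
  have path_unique {x' y' u' v' : Fin (p + 4)} (hxy : PathEdge x' y') (huv : PathEdge u' v')
      (hx : ¬ x' < u') (hu : ¬ u' < x') : u' = x' ∧ v' = y' := by
    simp only [PathEdge] at hxy huv
    omega
  cases h with
  | path huv hact hfirst =>
    cases h' with
    | path hxy hact' hfirst' =>
      exact path_unique hxy huv (fun h => hfirst x y hxy h hact') fun h => hfirst' u v huv h hact
    | leafFirst _ _ hpath => exact absurd hact (hpath u v huv)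
    | leafLast _ _ _ hpath => exact absurd hact (hpath u v huv)
  | leafFirst _ h2 hpath =>
    cases h' with
    | path hxy hact _ => exact absurd hact (hpath x y hxy)
    | leafFirst => exact ⟨rfl, rfl⟩
    | leafLast _ h2' => simp [h2] at h2'
  | leafLast _ h2 _ hpath =>
    cases h' with
    | path hxy hact _ => exact absurd hact (hpath x y hxy)
    | leafFirst _ h2' => simp [h2] at h2'
    | leafLast => exact ⟨rfl, rfl⟩

theorem PathInactive.of_agreeOff (hpath : PathInactive C) (hC : Config.AgreeOff u v C C')
    (huv : s(u, v) = s(0, 3)) (h3 : ∀ x y, PathEdge x y → C'.sign x = some true →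
      C'.sign y = some false → x ≠ 3 ∧ y ≠ 3) : PathInactive C' := by
  refine fun x y hxy hact =>
    hpath x y hxy (hC.active hact (hxy.ne_zero_three.trans_eq huv.symm) fun hx hy => ?_)
  have hxy3 := h3 x y hxy hx hy
  have hx0 : x ≠ 0 := by rintro rfl; simp [PathEdge] at hxy
  have hy0 : y ≠ 0 := by rintro rfl; simp [PathEdge] at hxy
  rcases Sym2.eq_iff.mp huv with ⟨rfl, rfl⟩ | ⟨rfl, rfl⟩
  exacts [⟨hx0, hxy3.1, hy0, hxy3.2⟩, ⟨hxy3.1, hx0, hxy3.2, hy0⟩]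

theorem Pivot.of_agreeOff (h : Pivot C u v) (hC : Config.AgreeOff u v C C')
    (hact : C'.Active u v) : Pivot C' u v := by
  have hu := hact.sign_fst_ne
  have hv := hact.sign_snd_ne
  have h20 : (2 : Fin (p + 4)) ≠ 0 := Fin.ne_of_val_ne (by decide : 2 ≠ 0)
  have h23 : (2 : Fin (p + 4)) ≠ 3 := Fin.ne_of_val_ne (by decide : 2 ≠ 3)
  cases h with
  | path huv _ hfirst =>
    refine .path huv hact fun x y hxy hxu hxy' => hfirst x y hxy hxu (hC.active hxy' ?_ ?_)
    · simp only [PathEdge] at hxy huv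
      grind
    · intro _ hy
      have hyu : y ≠ u := by rintro rfl; exact hu hy
      simp only [PathEdge] at hxy huv
      grind
  | leafFirst _ hsign hpath =>
    have hsign' : C'.sign 2 = some false := by
      rw [← hC.sign_eq 2 h20 h23, hsign]
    refine .leafFirst hact hsign' (hpath.of_agreeOff hC rfl fun x y hxy hx _ => ?_)
    have hx3 : x ≠ 3 := by rintro rfl; exact hv hx
    have hx2 : x ≠ 2 := by rintro rfl; simp [hx] at hsign'
    simp only [PathEdge, ne_eq, Fin.ext_iff, val_two, val_three] at hxy hx2 hx3 ⊢
    omega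
  | leafLast _ hsign h4 hpath =>
    have hsign' : C'.sign 2 = some true := by
      rw [← hC.sign_eq 2 h23 h20, hsign]
    have h4' (x : Fin (p + 4)) (hx : (x : ℕ) = 4) : C'.sign x ≠ some false := by
      rw [← hC.sign_eq x (by rintro rfl; rw [val_three] at hx; omega) (by rintro rfl; simp at hx)]
      exact h4 x hx
    refine .leafLast hact hsign' h4' (hpath.of_agreeOff hC Sym2.eq_swap fun x y hxy _ hy => ?_)
    have hy3 : y ≠ 3 := by rintro rfl; exact hu hy
    have hy4 : (y : ℕ) ≠ 4 := fun h => h4' y h hy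
    simp only [PathEdge, ne_eq, Fin.ext_iff, val_three] at hxy hy3 ⊢
    omega

section PathInactive

theorem PathInactive.eq_of_mem_red (hC : PathInactive C) {e : Sym2 (Fin (p + 4))}
    (he : e ∈ C.red) : e = s(0, 3) := by
  by_contra h
  obtain ⟨u, v, huv, rfl⟩ := exists_pathEdge_of_mem_edgeSet (C.matching.1 e he) h
  exact hC u v huv (Or.inl he)

theorem PathInactive.sign_ne_none (hC : PathInactive C) (h0 : x ≠ 0) (h3 : x ≠ 3) :
    C.sign x ≠ none := by
  rw [ne_eq, C.sign_none]
  rintro ⟨e, he, hx⟩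
  simp [hC.eq_of_mem_red he, h0, h3] at hx

theorem PathInactive.minus_of_pathEdge (hC : PathInactive C) (hxy : PathEdge x y)
    (hx : C.sign x ≠ none) (hy : C.sign y = some false) : C.sign x = some false := by
  have hactive := hC x y hxy
  simp only [Config.Active, not_or, not_and] at hactive
  match h : C.sign x with
  | none => exact absurd h hx
  | some true => exact absurd hy (hactive.2 h)
  | some false => rfl

theorem PathInactive.minus_of_le (hC : PathInactive C) (hx : 4 ≤ (x : ℕ)) (hxy : x ≤ y)
    (hy : C.sign y = some false) : C.sign x = some false := by
  induction hd : (y : ℕ) - x generalizing x with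
  | zero =>
    have : x = y := by omega
    exact this ▸ hy
  | succ d ih =>
    let x' : Fin (p + 4) := ⟨x + 1, by omega⟩
    have hx' : (x' : ℕ) = x + 1 := rfl
    refine hC.minus_of_pathEdge (y := x') ⟨by omega, hx'⟩ ?_ (ih (by omega) ?_ (by omega))
    · exact hC.sign_ne_none (by rintro rfl; simp at hx) (by rintro rfl; rw [val_three] at hx; omega)
    · rw [Fin.le_def]
      omega

end PathInactive

theorem Pivot.three_le_Qg (h : Pivot C u v) (hu : u = 0) (hv : C.sign v = some false) :
    3 ≤ Qg C := by
  cases h with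
  | path huv => simp [PathEdge, hu] at huv
  | leafLast => exact absurd hu (Fin.ne_of_val_ne (by decide : 3 ≠ 0))
  | leafFirst _ h2 hpath =>
    have h12 : (1 : Fin (p + 4)) ≠ 2 := Fin.ne_of_val_ne (by decide : 1 ≠ 2)
    have h13 : (1 : Fin (p + 4)) ≠ 3 := Fin.ne_of_val_ne (by decide : 1 ≠ 3)
    have h23 : (2 : Fin (p + 4)) ≠ 3 := Fin.ne_of_val_ne (by decide : 2 ≠ 3)
    have h1 : C.sign 1 = some false :=
      hpath.minus_of_pathEdge ⟨le_rfl, rfl⟩ (hpath.sign_ne_none Fin.zero_ne_one'.symm h13) h2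
    have hsub : {1, 2, 3} ⊆ C.minuses := by
      simp [Finset.insert_subset_iff, Config.mem_minuses, h1, h2, hv]
    calc 3 = ({1, 2, 3} : Finset (Fin (p + 4))).card := by
          rw [Finset.card_eq_three.mpr ⟨1, 2, 3, h12, h13, h23, rfl⟩]
      _ ≤ Qg C := Finset.card_le_card hsub

theorem Pivot.Qg_le_two (h : Pivot C u v) (hu : C.sign u = some true) (hv : v = 0) :
    Qg C ≤ 2 := by
  cases h with
  | path huv => simp [PathEdge, hv] at huv
  | leafFirst => exact absurd hv (Fin.ne_of_val_ne (by decide : 3 ≠ 0))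
  | leafLast _ h2 h4 hpath =>
    have hsub : C.minuses ⊆ {0, 1} := by
      intro x hx
      rw [Config.mem_minuses] at hx
      have hx2 : x ≠ 2 := by rintro rfl; simp [hx] at h2
      have hx3 : x ≠ 3 := by rintro rfl; simp [hx] at hu
      have hx4 : ¬ 4 ≤ (x : ℕ) := fun hle =>
        h4 ⟨4, by omega⟩ rfl (hpath.minus_of_le le_rfl hle hx)
      simp only [Finset.mem_insert, Finset.mem_singleton, ne_eq, Fin.ext_iff, val_two, val_three,
        Fin.val_zero, Fin.val_one] at *
      omega
    exact (Finset.card_le_card hsub).trans Finset.card_le_two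

theorem lt_of_mem_of_first (huv : s(u, v) ∈ C.red)
    (hfirst : ∀ x y, PathEdge x y → x < u → ¬ C.Active x y) {e : Sym2 (Fin (p + 4))}
    (he : e ∈ C.red) (hne : e ≠ s(u, v)) (hne' : e ≠ s(0, 3)) {x : Fin (p + 4)} (hx : x ∈ e) :
    u < x := by
  have hxu : x ≠ u := by
    rintro rfl
    exact hne (Config.red_eq_of_mem he huv hx (Sym2.mem_mk_left _ _))
  obtain ⟨y, z, hyz, rfl⟩ := exists_pathEdge_of_mem_edgeSet (C.matching.1 e he) hne'
  have hyu : ¬ y < u := fun h => hfirst y z hyz h (Or.inl he)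
  rcases Sym2.mem_iff.mp hx with rfl | rfl
  · exact lt_of_le_of_ne (not_lt.mp hyu) hxu.symm
  · simp only [PathEdge] at hyz
    omega

theorem Pivot.resolve_of_ne (h : Pivot C u v) (huv : s(u, v) ∈ C.red) {d : C.RedDart}
    (hd : s(d.1.1, d.1.2) ≠ s(u, v)) (hd' : s(d.1.1, d.1.2) ≠ s(0, 3)) :
    Pivot (C.resolve d) u v := by
  cases h with
  | leafFirst _ _ hpath => exact absurd (hpath.eq_of_mem_red d.2) hd'
  | leafLast _ _ _ hpath => exact absurd (hpath.eq_of_mem_red d.2) hd'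
  | path huv' hact hfirst =>
    have hlt (z) (hz : z ∈ s(d.1.1, d.1.2)) : u < z :=
      lt_of_mem_of_first huv hfirst d.2 hd hd' hz
    have hred := Config.mem_resolve_red.mpr ⟨hd.symm, huv⟩
    refine .path huv' (Or.inl hred) fun x y hxy hxu hact' => ?_
    have hyu : y ≤ u := by
      simp only [PathEdge] at hxy
      omega
    have hx (z) (hz : z ∈ s(d.1.1, d.1.2)) : x ≠ z := (hxu.trans (hlt z hz)).ne
    have hy (z) (hz : z ∈ s(d.1.1, d.1.2)) : y ≠ z := (hyu.trans_lt (hlt z hz)).ne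
    refine hfirst x y hxy hxu ((C.agreeOff_resolve d).active hact' ?_ fun _ _ => ?_)
    · intro heq
      exact hx x (heq ▸ Sym2.mem_mk_left x y) rfl
    · exact ⟨hx _ (Sym2.mem_mk_left _ _), hx _ (Sym2.mem_mk_right _ _),
        hy _ (Sym2.mem_mk_left _ _), hy _ (Sym2.mem_mk_right _ _)⟩

/-- The matching of the Seifert complex of `E_n` which resolves the pivot whenever it is red. -/
def Matched (C C' : Config (dynkinE (p + 4))) : Prop :=
  ∃ d : C.RedDart, Pivot C d.1.1 d.1.2 ∧ C.resolve d = C'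

/-- The contribution of a minus at `v` to the weight of a configuration with `Q = q`. The position
of `0` relative to `3` depends on `q`: resolving the pivot `(0, 3)` leads to `Q ≥ 3`, since `1`, `2`
and `3` then carry a minus, while resolving the pivot `(3, 0)` leads to `Q ≤ 2`, since there are no
minuses outside `{0, 1}`. -/
def height (q : ℕ) (v : Fin (p + 4)) : ℕ :=
  if v = 0 then (if 3 ≤ q then 0 else 4) else v

/-- The weight making `Matched` acyclic: it records first whether `03` is red, then how far from `1`
the minuses are. -/
noncomputable def weight (C : Config (dynkinE (p + 4))) : ℕ ×ₗ ℕ :=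
  toLex (if s(0, 3) ∈ C.red then 1 else 0, ∑ v ∈ C.minuses, height (Qg C) v)

theorem Pivot.resolve {d : C.RedDart} (h : Pivot C d.1.1 d.1.2) :
    Pivot (C.resolve d) d.1.1 d.1.2 :=
  h.of_agreeOff (C.agreeOff_resolve d) (C.active_resolve d)

theorem Pivot.height_lt (h : Pivot C u v) (hu : C.sign u = some true)
    (hv : C.sign v = some false) : height (Qg C) u < height (Qg C) v := by
  have hQ := fun hu => h.three_le_Qg hu hv
  have hQ' := h.Qg_le_two hu
  have h30 : (3 : Fin (p + 4)) ≠ 0 := Fin.ne_of_val_ne (by decide : 3 ≠ 0)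
  cases h with
  | path huv =>
    obtain ⟨hu, hv⟩ := huv
    have hu0 : u ≠ 0 := by rintro rfl; simp at hu
    have hv0 : v ≠ 0 := by rintro rfl; simp at hv
    simp only [height, if_neg hu0, if_neg hv0]
    omega
  | leafFirst =>
    simp only [height, if_true, if_pos (hQ rfl), if_neg h30, val_three, Nat.zero_lt_succ]
  | leafLast =>
    have hQ'' : ¬ 3 ≤ Qg C := Nat.not_le.mpr (Nat.lt_succ_of_le (hQ' rfl))
    simp only [height, if_neg h30, if_true, if_neg hQ'', val_three, Nat.lt_succ_self]

theorem Pivot.weight_resolve_symm_lt {d : C.RedDart} (h : Pivot C d.1.1 d.1.2) :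
    weight (C.resolve d.symm) < weight (C.resolve d) := by
  have hlt := h.resolve.height_lt (C.resolve_sign_fst d) (C.resolve_sign_snd d)
  simp only [weight, C.resolve_symm_red, C.sum_minuses_resolve]
  refine Prod.Lex.toLex_lt_toLex.mpr (Or.inr ⟨rfl, ?_⟩)
  rw [C.Qg_resolve] at hlt ⊢
  rw [C.Qg_resolve]
  exact Nat.add_lt_add_right hlt _

theorem weight_resolve_lt_of_eq {d e : C.RedDart} (hd : s(d.1.1, d.1.2) ≠ s(0, 3))
    (he : s(e.1.1, e.1.2) = s(0, 3)) : weight (C.resolve e) < weight (C.resolve d) := by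
  have hmem : s(0, 3) ∈ (C.resolve d).red := Config.mem_resolve_red.mpr ⟨hd.symm, he ▸ e.2⟩
  have hnotMem : s(0, 3) ∉ (C.resolve e).red := fun h => (Config.mem_resolve_red.mp h).1 he.symm
  simp only [weight, if_pos hmem, if_neg hnotMem]
  exact Prod.Lex.toLex_lt_toLex.mpr (Or.inl Nat.zero_lt_one)

theorem isMorseMatching : IsMorseMatching (Matched (p := p)) weight where
  dStep := fun ⟨d, _, hd⟩ => Config.dStep_iff.mpr ⟨d, hd⟩
  right_unique := by
    rintro C _ _ ⟨d, hd, rfl⟩ ⟨e, he, rfl⟩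
    rw [Subtype.ext (Prod.ext (hd.unique he).1 (hd.unique he).2) (a1 := d) (a2 := e)]
  disjoint := by
    rintro C _ _ ⟨d, hd, rfl⟩ ⟨e, he, rfl⟩
    have hplus := C.resolve_sign_fst d
    rw [(hd.resolve.unique he).1, e.sign_fst] at hplus
    simp at hplus
  triangular := by
    rintro C _ C' _ ⟨d, hd, rfl⟩ ⟨d', hd', rfl⟩ hstep
    obtain ⟨e, he⟩ := Config.dStep_iff.mp hstep
    have hpivot : Pivot (C'.resolve e) d.1.1 d.1.2 := he ▸ hd.resolve
    by_cases hed : s(e.1.1, e.1.2) = s(d'.1.1, d'.1.2)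
    · have hor : e = d' ∨ e = d'.symm := by
        rcases Sym2.eq_iff.mp hed with ⟨h₁, h₂⟩ | ⟨h₁, h₂⟩
        · exact Or.inl (Subtype.ext (Prod.ext h₁ h₂))
        · exact Or.inr (Subtype.ext (Prod.ext h₁ h₂))
      rcases hor with rfl | rfl
      · obtain ⟨h₁, h₂⟩ := hd'.resolve.unique hpivot
        exact Or.inl (Config.eq_of_resolve_eq e d (Prod.ext h₁ h₂) he)
      · exact Or.inr (he ▸ hd'.weight_resolve_symm_lt)
    · by_cases hleaf : s(e.1.1, e.1.2) = s(0, 3)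
      · exact Or.inr (he ▸ weight_resolve_lt_of_eq (hleaf ▸ Ne.symm hed) hleaf)
      · have hunique := (hd'.resolve_of_ne d'.2 hed hleaf).unique hpivot
        have hnone : (C'.resolve e).sign d'.1.1 = none :=
          Config.sign_eq_none (Config.mem_resolve_red.mpr ⟨Ne.symm hed, d'.2⟩)
            (Sym2.mem_mk_left _ _)
        rw [he, hunique.1, C.resolve_sign_fst] at hnone
        simp at hnone

section Critical

theorem forall_not_matched_iff :
    ((∀ C', ¬ Matched C C') ∧ ∀ C', ¬ Matched C' C) ↔ ∀ u v, ¬ Pivot C u v := by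
  constructor
  · rintro ⟨hsource, htarget⟩ u v h
    rcases h.active with hred | ⟨hu, hv⟩
    · exact hsource _ ⟨⟨(u, v), hred⟩, h, rfl⟩
    · obtain ⟨B, ⟨_, hB⟩, rfl, rfl⟩ := Config.exists_resolve_eq h.adj hu hv
      have hagree := (B.agreeOff_resolve ⟨(u, v), hB⟩).symm
      exact htarget B ⟨⟨(u, v), hB⟩, h.of_agreeOff hagree (Or.inl hB), rfl⟩
  · refine fun h => ⟨fun C' ⟨d, hd, _⟩ => h _ _ hd, ?_⟩
    rintro C' ⟨d, hd, rfl⟩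
    exact h _ _ hd.resolve

theorem mem_criticals {k m : ℤ} :
    C ∈ criticals Matched k m ↔ ((Qg C : ℤ) = k ∧ (Eg C : ℤ) = m) ∧ ∀ u v, ¬ Pivot C u v := by
  simp only [criticals, Finset.mem_filter, Finset.mem_univ, true_and, forall_not_matched_iff]

theorem pathInactive_of_forall_not_pivot (h : ∀ u v, ¬ Pivot C u v) : PathInactive C := by
  intro u
  induction u using WellFoundedLT.induction with
  | ind u ih => exact fun v huv hact => h u v (.path huv hact fun x y hxy hxu => ih x hxu y hxy)

theorem PathInactive.red_subset (hC : PathInactive C) : C.red ⊆ {s(0, 3)} :=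
  fun _ he => Finset.mem_singleton.mpr (hC.eq_of_mem_red he)

theorem eq_or_eq_sub_one_of_mem_criticals {k m : ℤ} (hC : C ∈ criticals Matched k m) :
    k = m ∨ k = m - 1 := by
  obtain ⟨⟨hQ, hE⟩, h⟩ := mem_criticals.mp hC
  have hcard := Finset.card_le_card (pathInactive_of_forall_not_pivot h).red_subset
  rw [Finset.card_singleton] at hcard
  rw [Eg] at hE
  omega

end Critical

section Diagonal

/-- The position of a vertex in the order `1, 2, 0, 3, 4, …`, for which the minuses of a critical
configuration without red edges form an initial segment. -/
def leafRank (v : Fin (p + 4)) : ℕ :=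
  if v = 0 then 2 else if (v : ℕ) ≤ 2 then v - 1 else v

theorem leafRank_injective : Function.Injective (leafRank (p := p)) := by
  intro u v h
  simp only [leafRank, Fin.ext_iff, Fin.val_zero] at h ⊢
  grind

theorem sign_ne_none_of_red_eq_empty (hred : C.red = ∅) (x : Fin (p + 4)) : C.sign x ≠ none := by
  simp [C.sign_none, hred]

theorem minus_zero_of_minus_three (h : ∀ u v, ¬ Pivot C u v) (hred : C.red = ∅)
    (h3 : C.sign 3 = some false) : C.sign 0 = some false := by
  have hpath := pathInactive_of_forall_not_pivot h
  have h2 : C.sign 2 = some false :=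
    hpath.minus_of_pathEdge ⟨one_le_two, rfl⟩ (sign_ne_none_of_red_eq_empty hred 2) h3
  match h0 : C.sign 0 with
  | none => exact absurd h0 (sign_ne_none_of_red_eq_empty hred 0)
  | some true => exact absurd (.leafFirst (Or.inr ⟨h0, h3⟩) h2 hpath) (h 0 3)
  | some false => rfl

theorem minus_two_of_minus_zero (h : ∀ u v, ¬ Pivot C u v) (hred : C.red = ∅)
    (h0 : C.sign 0 = some false) : C.sign 2 = some false := by
  have hpath := pathInactive_of_forall_not_pivot h
  have minus_two_of_minus_three (h3 : C.sign 3 = some false) : C.sign 2 = some false :=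
    hpath.minus_of_pathEdge ⟨one_le_two, rfl⟩ (sign_ne_none_of_red_eq_empty hred 2) h3
  match h2 : C.sign 2, h3 : C.sign 3 with
  | none, _ => exact absurd h2 (sign_ne_none_of_red_eq_empty hred 2)
  | _, none => exact absurd h3 (sign_ne_none_of_red_eq_empty hred 3)
  | some false, _ => rfl
  | some true, some false => exact h2.symm.trans (minus_two_of_minus_three h3)
  | some true, some true =>
    refine absurd (.leafLast (Or.inr ⟨h3, h0⟩) h2 (fun x hx h4 => ?_) hpath) (h 3 0)
    have h3' : C.sign 3 = some false :=
      hpath.minus_of_pathEdge ⟨Nat.le_add_left 1 2, hx⟩ (by simp [h3]) h4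
    simp [h3] at h3'

theorem exists_minus_leafRank_eq (h : ∀ u v, ¬ Pivot C u v) (hred : C.red = ∅) {i : ℕ}
    (hy : C.sign y = some false) (hyi : leafRank y = i + 1) :
    ∃ x, C.sign x = some false ∧ leafRank x = i := by
  have hpath := pathInactive_of_forall_not_pivot h
  by_cases h0 : y = 0
  · subst h0
    refine ⟨2, minus_two_of_minus_zero h hred hy, ?_⟩
    simp only [leafRank, Fin.ext_iff, val_two, Fin.val_zero] at hyi ⊢
    grind
  by_cases h3 : y = 3
  · subst h3
    refine ⟨0, minus_zero_of_minus_three h hred hy, ?_⟩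
    simp only [leafRank, Fin.ext_iff, val_three, Fin.val_zero] at hyi ⊢
    grind
  simp only [leafRank, if_neg h0] at hyi
  have hy2 : 2 ≤ (y : ℕ) := by grind
  have hpred : PathEdge ⟨y - 1, by omega⟩ y := ⟨by simp only; omega, by simp only; omega⟩
  refine ⟨⟨y - 1, by omega⟩,
    hpath.minus_of_pathEdge hpred (sign_ne_none_of_red_eq_empty hred _) hy, ?_⟩
  simp only [leafRank, Fin.ext_iff, val_three, Fin.val_zero] at h3 ⊢
  grind

theorem image_leafRank_minuses (h : ∀ u v, ¬ Pivot C u v) (hred : C.red = ∅) :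
    C.minuses.image leafRank = Finset.range (Qg C) := by
  rw [← Config.card_minuses, ← Finset.card_image_of_injective _ leafRank_injective]
  refine eq_range_card_of_pred_mem fun i hi => ?_
  obtain ⟨y, hy, hyi⟩ := Finset.mem_image.mp hi
  obtain ⟨x, hx, hxi⟩ := exists_minus_leafRank_eq h hred (Config.mem_minuses.mp hy) hyi
  exact Finset.mem_image.mpr ⟨x, Config.mem_minuses.mpr hx, hxi⟩

theorem card_criticals_diagonal_le_one (m : ℤ) :
    (criticals (Matched (p := p)) m m).card ≤ 1 := by
  have hred {C : Config (dynkinE (p + 4))} (hQ : (Qg C : ℤ) = m) (hE : (Eg C : ℤ) = m) :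
      C.red = ∅ := by
    rw [Eg] at hE
    exact Finset.card_eq_zero.mp (by omega)
  refine Finset.card_le_one.mpr fun C hC C' hC' => ?_
  obtain ⟨⟨hQ, hE⟩, h⟩ := mem_criticals.mp hC
  obtain ⟨⟨hQ', hE'⟩, h'⟩ := mem_criticals.mp hC'
  refine Config.ext_minuses ((hred hQ hE).trans (hred hQ' hE').symm) ?_
  apply Finset.image_injective leafRank_injective
  rw [image_leafRank_minuses h (hred hQ hE), image_leafRank_minuses h' (hred hQ' hE'),
    Nat.cast_injective (hQ.trans hQ'.symm)]

end Diagonal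

section OffDiagonal

/-- The vertices `4, …, b + 3`, together with `1` if `σ` holds: the minuses of a critical
configuration with red edge `03`. -/
def segment (σ : Bool) (b : ℕ) : Finset (Fin (p + 4)) :=
  Finset.univ.filter fun x => (4 ≤ (x : ℕ) ∧ (x : ℕ) < 4 + b) ∨ (σ = true ∧ (x : ℕ) = 1)

theorem mem_segment {σ : Bool} {b : ℕ} :
    x ∈ segment σ b ↔ (4 ≤ (x : ℕ) ∧ (x : ℕ) < 4 + b) ∨ (σ = true ∧ (x : ℕ) = 1) := by
  simp [segment]

theorem card_segment (σ : Bool) {b : ℕ} (hb : b ≤ p) :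
    (segment σ b : Finset (Fin (p + 4))).card = b + σ.toNat := by
  have hval : (segment σ b : Finset (Fin (p + 4))).map Fin.valEmbedding =
      Finset.Ico 4 (4 + b) ∪ if σ = true then {1} else ∅ := by
    ext i
    simp only [Finset.mem_map, mem_segment, Fin.valEmbedding_apply, Finset.mem_union,
      Finset.mem_Ico]
    constructor
    · rintro ⟨x, hx, rfl⟩
      grind
    · exact fun hi => ⟨⟨i, by grind⟩, by grind, rfl⟩
  rw [← Finset.card_map Fin.valEmbedding, hval, Finset.card_union_of_disjoint]
  · cases σ <;> simp
  · cases σ <;> simp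

theorem forall_not_pivot_of_minuses_eq_segment (hred : C.red = {s(0, 3)}) {σ : Bool} {b : ℕ}
    (hb : 1 ≤ b) (hbp : b ≤ p) (hC : C.minuses = segment σ b) (u v : Fin (p + 4)) :
    ¬ Pivot C u v := by
  have hsign (x) : C.sign x = some false ↔ x ∈ segment σ b := by rw [← hC, Config.mem_minuses]
  have hpath : PathInactive C := by
    rintro x y hxy (hmem | ⟨hx, hy⟩)
    · exact hxy.ne_zero_three (by simpa [hred] using hmem)
    · have hx3 : x ≠ 3 := by
        rintro rfl
        have hmem : s(0, 3) ∈ C.red := hred ▸ Finset.mem_singleton_self _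
        simp [Config.sign_eq_none hmem (Sym2.mem_mk_right 0 3)] at hx
      have hxs : x ∉ segment σ b := by simp [← hsign, hx]
      rw [hsign, mem_segment] at hy
      simp only [mem_segment, PathEdge, ne_eq, Fin.ext_iff, val_three] at hxs hxy hx3
      omega
  intro h
  cases h with
  | path huv hact _ => exact hpath u v huv hact
  | leafFirst _ h2 _ =>
    rw [hsign, mem_segment, val_two] at h2
    omega
  | leafLast _ _ h4 _ =>
    exact h4 ⟨4, by omega⟩ rfl
      ((hsign _).mpr (mem_segment.mpr (Or.inl ⟨le_rfl, Nat.lt_add_of_pos_right hb⟩)))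

theorem PathInactive.exists_minus_iff_lt (hC : PathInactive C) :
    ∃ b ≤ p, ∀ x : Fin (p + 4), 4 ≤ (x : ℕ) → (C.sign x = some false ↔ (x : ℕ) < 4 + b) := by
  let A := (Finset.range p).filter fun i =>
    ∃ hi : 4 + i < p + 4, C.sign ⟨4 + i, hi⟩ = some false
  have mem_A {i : ℕ} (hi : 4 + i < p + 4) : i ∈ A ↔ C.sign ⟨4 + i, hi⟩ = some false := by
    have hip : i < p := by omega
    simp only [A, Finset.mem_filter, Finset.mem_range, hip, hi, true_and, exists_true_left]
  have hrange : A = Finset.range A.card := by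
    refine eq_range_card_of_pred_mem fun i hi => ?_
    obtain ⟨-, hlt, hminus⟩ := Finset.mem_filter.mp hi
    refine (mem_A (by omega)).mpr (hC.minus_of_le (Nat.le_add_right 4 i) ?_ hminus)
    exact Fin.mk_le_mk.mpr (Nat.add_le_add_left i.le_succ 4)
  refine ⟨A.card, (Finset.card_filter_le _ _).trans_eq (Finset.card_range p), fun x hx => ?_⟩
  have hx' : (⟨4 + (x - 4), by omega⟩ : Fin (p + 4)) = x :=
    Fin.ext (Nat.add_sub_cancel' hx)
  have hiff := mem_A (i := x - 4) (by omega)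
  rw [hx', hrange, Finset.mem_range] at hiff
  rw [← hiff]
  omega

theorem exists_minuses_eq_segment (hred : C.red = {s(0, 3)}) (h : ∀ u v, ¬ Pivot C u v) :
    ∃ σ b, 1 ≤ b ∧ b ≤ p ∧ C.minuses = segment σ b := by
  have hpath := pathInactive_of_forall_not_pivot h
  have hmem : s(0, 3) ∈ C.red := hred ▸ Finset.mem_singleton_self _
  have h0 : C.sign 0 = none := Config.sign_eq_none hmem (Sym2.mem_mk_left _ _)
  have h3 : C.sign 3 = none := Config.sign_eq_none hmem (Sym2.mem_mk_right _ _)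
  have h2 : C.sign 2 = some true := by
    match h2 : C.sign 2 with
    | none =>
      exact absurd h2 (hpath.sign_ne_none (Fin.ne_of_val_ne (by decide : 2 ≠ 0))
        (Fin.ne_of_val_ne (by decide : 2 ≠ 3)))
    | some true => rfl
    | some false => exact absurd (.leafFirst (Or.inl hmem) h2 hpath) (h 0 3)
  obtain ⟨x₄, hx₄, hminus⟩ : ∃ x : Fin (p + 4), (x : ℕ) = 4 ∧ C.sign x = some false := by
    by_contra! h4
    exact h 3 0 (.leafLast (Or.inl (Sym2.eq_swap ▸ hmem)) h2 h4 hpath)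
  obtain ⟨b, hbp, hb⟩ := hpath.exists_minus_iff_lt
  refine ⟨decide (C.sign 1 = some false), b, ?_, hbp, ?_⟩
  · have := (hb x₄ hx₄.ge).mp hminus
    omega
  · ext x
    rw [Config.mem_minuses, mem_segment, decide_eq_true_iff]
    by_cases hx : 4 ≤ (x : ℕ)
    · rw [hb x hx]
      omega
    · have hcases : x = 0 ∨ x = 1 ∨ x = 2 ∨ x = 3 := by
        simp only [Fin.ext_iff, val_two, val_three, Fin.val_zero, Fin.val_one]
        omega
      rcases hcases with rfl | rfl | rfl | rfl
      · simp [h0]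
      · simp
      · simp only [h2, val_two]
        simp
      · simp only [h3, val_three]
        simp

theorem isMatching_leaf : IsMatching (dynkinE (p + 4)) {s(0, 3)} := by
  simp [IsMatching, adj_iff]

/-- The critical configurations outside the diagonal, for `1 ≤ b ≤ p`. -/
noncomputable def segmentConfig (σ : Bool) (b : ℕ) : Config (dynkinE (p + 4)) :=
  Config.ofMinuses isMatching_leaf (segment σ b)

theorem minuses_segmentConfig (σ : Bool) (b : ℕ) :
    (segmentConfig (p := p) σ b).minuses = segment σ b := by
  refine Config.minuses_ofMinuses _ fun v hv e he hve => ?_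
  rw [Finset.mem_singleton.mp he, Sym2.mem_iff, Fin.ext_iff, Fin.ext_iff, Fin.val_zero,
    val_three] at hve
  rw [mem_segment] at hv
  omega

theorem mem_criticals_succ {k : ℤ} : C ∈ criticals Matched k (k + 1) ↔
    ∃ σ b, 1 ≤ b ∧ b ≤ p ∧ (b : ℤ) + σ.toNat = k ∧ C = segmentConfig σ b := by
  rw [mem_criticals]
  constructor
  · rintro ⟨⟨hQ, hE⟩, h⟩
    have hcard : C.red.card = 1 := by
      rw [Eg] at hE
      omega
    have hred : C.red = {s(0, 3)} :=
      Finset.eq_of_subset_of_card_le (pathInactive_of_forall_not_pivot h).red_subset hcard.ge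
    obtain ⟨σ, b, hb, hbp, hC⟩ := exists_minuses_eq_segment hred h
    refine ⟨σ, b, hb, hbp, ?_, Config.ext_minuses hred (hC.trans (minuses_segmentConfig σ b).symm)⟩
    rw [← hQ, ← Config.card_minuses, hC, card_segment σ hbp, Nat.cast_add]
  · rintro ⟨σ, b, hb, hbp, rfl, rfl⟩
    have hQ : Qg (segmentConfig (p := p) σ b) = b + σ.toNat := by
      rw [← Config.card_minuses, minuses_segmentConfig, card_segment σ hbp]
    have hred : (segmentConfig (p := p) σ b).red = {s(0, 3)} := rfl
    exact ⟨⟨by simp [hQ], by simp [Eg, hQ, hred]⟩,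
      forall_not_pivot_of_minuses_eq_segment hred hb hbp (minuses_segmentConfig σ b)⟩

theorem eq_of_segmentConfig_eq {σ τ : Bool} {b c : ℕ}
    (h : segmentConfig (p := p) σ b = segmentConfig τ c) : σ = τ := by
  have hmem : (1 : Fin (p + 4)) ∈ segment σ b ↔ (1 : Fin (p + 4)) ∈ segment τ c := by
    rw [← minuses_segmentConfig, h, minuses_segmentConfig]
  simpa [mem_segment] using hmem

theorem card_criticals_succ (k : ℤ) : (criticals (Matched (p := p)) k (k + 1)).card =
    (if 1 ≤ k ∧ k ≤ p then 1 else 0) + (if 2 ≤ k ∧ k ≤ p + 1 then 1 else 0) := by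
  have hcard : (criticals (Matched (p := p)) k (k + 1)).card =
      (Finset.univ.filter fun σ : Bool => 1 ≤ k - σ.toNat ∧ k - σ.toNat ≤ p).card := by
    symm
    refine Finset.card_nbij (fun σ => segmentConfig σ (k - σ.toNat).toNat) ?_ ?_ ?_
    · intro σ hσ
      have hσ := (Finset.mem_filter.mp hσ).2
      exact mem_criticals_succ.mpr ⟨σ, _, by omega, by omega, by omega, rfl⟩
    · exact fun σ _ τ _ h => eq_of_segmentConfig_eq h
    · intro C hC
      obtain ⟨σ, b, hb, hbp, rfl, rfl⟩ := mem_criticals_succ.mp hC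
      refine ⟨σ, Finset.mem_coe.mpr (Finset.mem_filter.mpr ⟨Finset.mem_univ _, ?_⟩), ?_⟩
      · omega
      · simp only [add_sub_cancel_right, Int.toNat_natCast]
  rw [hcard, Finset.card_filter, Fintype.sum_bool, add_comm]
  simp only [Bool.toNat_true, Bool.toNat_false, Nat.cast_one, Nat.cast_zero]
  grind

end OffDiagonal

theorem SHdim_eq_card_criticals (k m : ℤ) :
    SHdim (dynkinE (p + 4)) k m = (criticals (Matched (p := p)) k m).card :=
  isMorseMatching.SHdim_eq_card_criticals (fun _ ⟨_, hC⟩ => eq_or_eq_sub_one_of_mem_criticals hC)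
    (card_criticals_diagonal_le_one m) k

theorem SHdim_diagonal (m : ℤ) :
    SHdim (dynkinE (p + 4)) m m = if 0 ≤ m ∧ m ≤ p + 4 then 1 else 0 := by
  have hle : SHdim (dynkinE (p + 4)) m m ≤ 1 :=
    (SHdim_eq_card_criticals m m).trans_le (card_criticals_diagonal_le_one m)
  have hpos := SHdim_diagonal_pos_iff (dynkinE (p + 4)) m
  rw [Fintype.card_fin, Nat.cast_add, Nat.cast_ofNat] at hpos
  split_ifs with h <;> rw [← hpos] at h <;> omega

end dynkinE

theorem SHdim_dynkinE_general (n : ℕ) (hn : 4 ≤ n) (k m : ℤ) :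
    SHdim (dynkinE n) k m =
      (if k = m ∧ 0 ≤ k ∧ k ≤ (n : ℤ) then 1 else 0) +
        (if m = k + 1 ∧ 1 ≤ k ∧ k ≤ (n : ℤ) - 4 then 1 else 0) +
          (if m = k + 1 ∧ 2 ≤ k ∧ k ≤ (n : ℤ) - 3 then 1 else 0) := by
  obtain ⟨p, rfl⟩ := Nat.exists_eq_add_of_le' hn
  rcases eq_or_ne k m with rfl | hkm
  · rw [dynkinE.SHdim_diagonal]
    simp
  rw [dynkinE.SHdim_eq_card_criticals]
  rcases eq_or_ne m (k + 1) with rfl | hkm'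
  · rw [dynkinE.card_criticals_succ]
    simp only [hkm, false_and, if_false, true_and, zero_add, Nat.cast_add, Nat.cast_ofNat]
    congr 2 <;> simp only [eq_iff_iff] <;> omega
  · have hempty : criticals dynkinE.Matched k m = (∅ : Finset (Config (dynkinE (p + 4)))) := by
      refine Finset.eq_empty_of_forall_notMem fun C hC => ?_
      have := dynkinE.eq_or_eq_sub_one_of_mem_criticals hC
      omega
    simp [hempty, hkm, hkm']

/-- the Seifert cohomology of the Dynkin diagrams `E₆`, `E₇`, `E₈`:
`dim SH^k(E_n,m) = 1` if `k = m` and `0 ≤ k ≤ n`; for `m = k + 1` it is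
`(1 if 1 ≤ k ≤ n - 4) + (1 if 2 ≤ k ≤ n - 3)`; and `0` otherwise. -/
theorem SHdim_dynkinE (n : ℕ) (hn : n = 6 ∨ n = 7 ∨ n = 8) (k m : ℤ) :
    SHdim (dynkinE n) k m =
      (if k = m ∧ 0 ≤ k ∧ k ≤ (n : ℤ) then 1 else 0) +
        (if m = k + 1 ∧ 1 ≤ k ∧ k ≤ (n : ℤ) - 4 then 1 else 0) +
          (if m = k + 1 ∧ 2 ≤ k ∧ k ≤ (n : ℤ) - 3 then 1 else 0) :=
  SHdim_dynkinE_general n (by omega) k m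

end Seifert
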